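/- Let A♯ be a self-adjoint extension of A, z₀ ∉ Sp(A♯), ψ₀ ∈ Ker(A* − z₀I) nonzero, and μ ∈ H a gauge. For every z ∈ ℂ ∖ Sp(A♯): ⟨ψ(z̄), μ⟩ ≠ 0 if and only if H = ran(A − zI) ∔ span{μ} (direct algebraic sum); and in that case, for every φ ∈ H one has φ − φ̂(z)μ ∈ ran(A − zI), where φ̂(z) := ⟨ψ(z̄), φ⟩ / ⟨ψ(z̄), μ⟩. -/

import Mathlib

/-!
The vector `ψ(z̄) = ψ₀ + (z̄ - z₀)(B - z̄)⁻¹ψ₀` is orthogonal to `ran(A - z)` (`psiFun_orthogonal`)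
and nonzero: if it vanished, `ψ₀` would lie in the domain of `B` and be an eigenvector for the
resolvent point `z₀` (`psiFun_ne_zero`). The orthogonal complement of `ran(A - z)` is
`Ker(A* - z̄)`, which is one-dimensional and hence spanned by `ψ(z̄)`. Since `A` is closed and `z` is
a point of regular type, `ran(A - z)` is closed (`isClosed_ranSubmodule`), so
`ran(A - z)` is exactly the hyperplane `{v | ⟪ψ(z̄), v⟫ = 0}` (`mem_ranShift_iff`).

Everything then reduces to linear algebra: `v - c • μ` lies in this hyperplane iff
`⟪ψ(z̄), v⟫ = c ⟪ψ(z̄), μ⟫`, which has a unique solution `c` for every `v` iff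
`⟪ψ(z̄), μ⟫ ≠ 0`, namely the stated quotient.
-/


open scoped ComplexConjugate
open Complex

noncomputable section

variable {H : Type*} [NormedAddCommGroup H] [InnerProductSpace ℂ H] [CompleteSpace H]

local notation "⟪" x ", " y "⟫" => @inner ℂ _ _ x y

/-- The range of `T - z·I`, as a subset of `H`. -/
def ranShift (T : H →ₗ.[ℂ] H) (z : ℂ) : Set H :=
  Set.range fun φ : T.domain => T φ - z • (φ : H)

/-- `ψ` belongs to the kernel of `T - z·I`. -/
def InKerShift (T : H →ₗ.[ℂ] H) (z : ℂ) (ψ : H) : Prop :=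
  ∃ h : ψ ∈ T.domain, T ⟨ψ, h⟩ = z • ψ

/-- `H = ran(A - z·I) ∔ span{μ}` (direct algebraic sum): every vector has a unique
decomposition `v = r + c • μ` with `r ∈ ran(A - z·I)`. -/
def GaugeSplit (A : H →ₗ.[ℂ] H) (μ : H) (z : ℂ) : Prop :=
  ∀ v : H, ∃! c : ℂ, v - c • μ ∈ ranShift A z

/-- The exceptional set `S_μ`. -/
def Smu (A : H →ₗ.[ℂ] H) (μ : H) : Set ℂ := {z | ¬ GaugeSplit A μ z}

/-- `A` is simple: `⋂_{Im z ≠ 0} ran(A - z·I) = {0}`. -/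
def IsSimpleOp (A : H →ₗ.[ℂ] H) : Prop :=
  (⋂ z ∈ {w : ℂ | w.im ≠ 0}, ranShift A z) = ({0} : Set H)

/-- `A` is regular: every `z ∈ ℂ` is a point of regular type, i.e. `A - z·I` has a
bounded inverse on its range. -/
def IsRegularOp (A : H →ₗ.[ℂ] H) : Prop :=
  ∀ z : ℂ, ∃ c : ℝ, 0 < c ∧ ∀ φ : A.domain, c * ‖(φ : H)‖ ≤ ‖A φ - z • (φ : H)‖

/-- `A` has deficiency indices `(1,1)`: for every `z ∈ ℂ`, the kernel of `A* - z·I`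
is spanned by a single nonzero vector. -/
def DefIndicesOneOne (A : H →ₗ.[ℂ] H) : Prop :=
  ∀ z : ℂ, ∃ v : H, v ≠ 0 ∧
    {ψ : H | InKerShift A.adjoint z ψ} = {w : H | ∃ c : ℂ, w = c • v}

/-- `A` is symmetric. -/
def IsSymmetricPOp (A : H →ₗ.[ℂ] H) : Prop :=
  ∀ x y : A.domain, ⟪(A x : H), (y : H)⟫ = ⟪(x : H), (A y : H)⟫

/-- The data of a densely defined, closed, symmetric, simple, regular operator with
deficiency indices (1,1): the setting of Krein's theory. -/
structure KreinOp (H : Type*) [NormedAddCommGroup H] [InnerProductSpace ℂ H]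
    [CompleteSpace H] where
  A : H →ₗ.[ℂ] H
  dense : Dense (A.domain : Set H)
  closed : A.IsClosed
  symm : IsSymmetricPOp A
  simple : IsSimpleOp A
  regular : IsRegularOp A
  defOneOne : DefIndicesOneOne A

/-- `B` is a self-adjoint extension of `A` (within `H`). -/
def IsSAExt (A B : H →ₗ.[ℂ] H) : Prop :=
  A ≤ B ∧ IsSelfAdjoint B

/-- `R z` is, for every `z ∈ res`, the (everywhere defined, bounded) inverse of `B - z·I`;
in particular `res ⊆ ℂ ∖ Sp(B)`. -/
def IsResolventOn (B : H →ₗ.[ℂ] H) (res : Set ℂ) (R : ℂ → H →L[ℂ] H) : Prop :=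
  ∀ z ∈ res, (∀ v : H, ∃ h : R z v ∈ B.domain, B ⟨R z v, h⟩ - z • R z v = v)
    ∧ ∀ φ : B.domain, R z ((B φ : H) - z • (φ : H)) = (φ : H)

/-- `ψ(z) = ψ₀ + (z - z₀)(B - z·I)⁻¹ ψ₀`. -/
def psiFun (R : ℂ → H →L[ℂ] H) (z₀ : ℂ) (ψ₀ : H) (z : ℂ) : H :=
  ψ₀ + (z - z₀) • R z ψ₀

/-- `ξ(z) = ψ(z̄) / ⟪μ, ψ(z̄)⟫`. -/
def xiFun (μ : H) (R : ℂ → H →L[ℂ] H) (z₀ : ℂ) (ψ₀ : H) (z : ℂ) : H :=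
  (⟪μ, psiFun R z₀ ψ₀ (conj z)⟫)⁻¹ • psiFun R z₀ ψ₀ (conj z)

/-- `P` is the orthogonal projection onto `Ker(B - x·I)`. -/
def IsEigenProjection (B : H →ₗ.[ℂ] H) (x : ℝ) (P : H →L[ℂ] H) : Prop :=
  IsSelfAdjoint P ∧ (∀ v : H, P (P v) = P v) ∧ ∀ v : H, (P v = v ↔ InKerShift B (x : ℂ) v)


/-- `ran(A - z·I)` as a submodule; its underlying set is definitionally `ranShift A z`. -/
def ranSubmodule (A : H →ₗ.[ℂ] H) (z : ℂ) : Submodule ℂ H :=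
  LinearMap.range (A.toFun - z • A.domain.subtype)

theorem mem_ranSubmodule (A : H →ₗ.[ℂ] H) (z : ℂ) (v : H) :
    v ∈ ranSubmodule A z ↔ v ∈ ranShift A z := Iff.rfl

/-- The range is the image of the complete space `A.graph` under `(x, y) ↦ y - z • x`, which the
regular-type estimate makes antilipschitz. -/
theorem isClosed_ranSubmodule (A : H →ₗ.[ℂ] H) (hA : A.IsClosed) (hreg : IsRegularOp A) (z : ℂ) :
    IsClosed (ranSubmodule A z : Set H) := by
  obtain ⟨c, hc, hbd⟩ := hreg z
  let g : A.graph →L[ℂ] H :=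
    (ContinuousLinearMap.snd ℂ H H - z • ContinuousLinearMap.fst ℂ H H).comp A.graph.subtypeL
  have : CompleteSpace A.graph := (_root_.IsClosed.isComplete hA).completeSpace_coe
  have hK : 0 ≤ 1 + (1 + ‖z‖) * c⁻¹ := by positivity
  have hanti : AntilipschitzWith ⟨1 + (1 + ‖z‖) * c⁻¹, hK⟩ g := by
    refine g.antilipschitz_of_bound ?_
    rintro ⟨⟨x, y⟩, hxy⟩
    obtain ⟨φ, hφ⟩ := A.mem_graph_iff'.1 hxy
    obtain ⟨rfl, rfl⟩ := Prod.mk.inj hφ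
    have h1 := hbd φ
    change ‖((φ : H), A φ)‖ ≤ (1 + (1 + ‖z‖) * c⁻¹) * ‖A φ - z • (φ : H)‖
    set d := ‖A φ - z • (φ : H)‖
    have hd : 0 ≤ d := norm_nonneg _
    have hx : ‖(φ : H)‖ ≤ c⁻¹ * d := by
      rw [inv_mul_eq_div, le_div_iff₀ hc]; linarith
    have hy : ‖A φ‖ ≤ d + ‖z‖ * ‖(φ : H)‖ := by
      rw [← norm_smul]
      simpa using norm_add_le (A φ - z • (φ : H)) (z • (φ : H))
    have hzx := mul_le_mul_of_nonneg_left hx (norm_nonneg z)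
    have h2 : 0 ≤ c⁻¹ * d := by positivity
    have h3 : 0 ≤ ‖z‖ * (c⁻¹ * d) := by positivity
    exact max_le (by dsimp only; nlinarith) (by dsimp only; nlinarith)
  have hrange : (ranSubmodule A z : Set H) = Set.range g := by
    ext v
    constructor
    · rintro ⟨φ, rfl⟩
      exact ⟨⟨(φ, A φ), A.mem_graph φ⟩, rfl⟩
    · rintro ⟨⟨⟨x, y⟩, hxy⟩, rfl⟩
      obtain ⟨φ, hφ⟩ := A.mem_graph_iff'.1 hxy
      obtain ⟨rfl, rfl⟩ := Prod.mk.inj hφ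
      exact ⟨φ, rfl⟩
  rw [hrange]
  exact hanti.isClosed_range g.uniformContinuous

/-- `[ran(A - z·I)]ᗮ ⊆ Ker(A* - z̄·I)`. -/
theorem inKerShift_adjoint_of_orthogonal (A : H →ₗ.[ℂ] H) (hd : Dense (A.domain : Set H)) (z : ℂ)
    (u : H) (hu : ∀ φ : A.domain, ⟪u, A φ - z • (φ : H)⟫ = 0) :
    InKerShift A.adjoint (conj z) u := by
  have key : ∀ φ : A.domain, ⟪conj z • u, (φ : H)⟫ = ⟪u, A φ⟫ := fun φ => by
    have := hu φ
    rw [inner_sub_right, inner_smul_right, sub_eq_zero] at this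
    rw [inner_smul_left, this, Complex.conj_conj]
  exact ⟨LinearPMap.mem_adjoint_domain_of_exists u ⟨_, key⟩,
    LinearPMap.adjoint_apply_eq hd _ key⟩

/-- `ψ(z̄)` is orthogonal to `ran(A - z·I)`. -/
theorem psiFun_orthogonal (A B : H →ₗ.[ℂ] H) (hd : Dense (A.domain : Set H)) (hB : IsSAExt A B)
    (res : Set ℂ) (R : ℂ → H →L[ℂ] H) (hR : IsResolventOn B res R) (z₀ : ℂ) (ψ₀ : H)
    (hψ₀ : InKerShift A.adjoint z₀ ψ₀) (z : ℂ) (hz : conj z ∈ res) (φ : A.domain) :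
    ⟪psiFun R z₀ ψ₀ (conj z), A φ - z • (φ : H)⟫ = 0 := by
  obtain ⟨hle, hsa⟩ := hB
  obtain ⟨hu, hBu⟩ := (hR _ hz).1 ψ₀
  obtain ⟨h0, hA0⟩ := hψ₀
  have e0 : ⟪z₀ • ψ₀, (φ : H)⟫ = ⟪ψ₀, A φ⟫ := by
    rw [← hA0]; exact LinearPMap.adjoint_isFormalAdjoint hd ⟨ψ₀, h0⟩ φ
  have hform : B.IsFormalAdjoint B := by
    have h := LinearPMap.adjoint_isFormalAdjoint hsa.dense_domain
    rwa [LinearPMap.isSelfAdjoint_def.1 hsa] at h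
  have e1 : ⟪ψ₀ + conj z • R (conj z) ψ₀, (φ : H)⟫ = ⟪R (conj z) ψ₀, A φ⟫ := by
    have h := hform ⟨_, hu⟩ ⟨φ, hle.1 φ.2⟩
    rw [← hle.2 (x := φ) (y := ⟨φ, hle.1 φ.2⟩) rfl, sub_eq_iff_eq_add.1 hBu] at h
    exact h
  rw [inner_smul_left] at e0
  rw [inner_add_left, inner_smul_left, Complex.conj_conj] at e1
  simp only [psiFun, inner_add_left, inner_smul_left, inner_sub_right, inner_smul_right, ← e0,
    ← e1, map_sub, Complex.conj_conj]
  ring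

/-- If `ψ(w) = 0`, then `ψ₀` is in the domain of `B` and `B ψ₀ = z₀ ψ₀`, which is impossible for
`z₀` in the resolvent set. -/
theorem psiFun_ne_zero (B : H →ₗ.[ℂ] H) (res : Set ℂ) (R : ℂ → H →L[ℂ] H)
    (hR : IsResolventOn B res R) (z₀ : ℂ) (hz₀ : z₀ ∈ res) (ψ₀ : H) (hne : ψ₀ ≠ 0)
    (w : ℂ) (hw : w ∈ res) : psiFun R z₀ ψ₀ w ≠ 0 := by
  intro h
  obtain ⟨hu, hBu⟩ := (hR _ hw).1 ψ₀
  have hψ : ψ₀ = (z₀ - w) • R w ψ₀ := by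
    rw [psiFun, add_eq_zero_iff_eq_neg] at h
    rw [← neg_sub, neg_smul]
    exact h
  have hk := (hR _ hz₀).2 ((z₀ - w) • ⟨R w ψ₀, hu⟩)
  rw [LinearPMap.map_smul, sub_eq_iff_eq_add.1 hBu] at hk
  have hcoe : (((z₀ - w) • (⟨R w ψ₀, hu⟩ : B.domain) : B.domain) : H) = ψ₀ := hψ.symm
  rw [hcoe, smul_add, smul_comm (z₀ - w) w, ← hψ, ← add_smul, sub_add_cancel, sub_self,
    map_zero] at hk
  exact hne hk.symm

/-- A nonzero vector orthogonal to `ran(A - z·I)` spans `Ker(A* - z̄·I)`, so `ran(A - z·I)` is the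
hyperplane orthogonal to it. -/
theorem mem_ranShift_iff (S : KreinOp H) (z : ℂ) (ψ : H) (hne : ψ ≠ 0)
    (horth : ∀ φ : S.A.domain, ⟪ψ, S.A φ - z • (φ : H)⟫ = 0) (v : H) :
    v ∈ ranShift S.A z ↔ ⟪ψ, v⟫ = 0 := by
  constructor
  · rintro ⟨φ, rfl⟩
    exact horth φ
  · intro hv
    have hcl := isClosed_ranSubmodule S.A S.closed S.regular z
    have : CompleteSpace (ranSubmodule S.A z) := hcl.isComplete.completeSpace_coe
    rw [← mem_ranSubmodule, ← Submodule.orthogonal_orthogonal (ranSubmodule S.A z),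
      Submodule.mem_orthogonal]
    intro u hu
    obtain ⟨e, -, hker⟩ := S.defOneOne (conj z)
    have hψ : ψ ∈ {w : H | ∃ c : ℂ, w = c • e} := by
      rw [← hker]; exact inKerShift_adjoint_of_orthogonal S.A S.dense z ψ horth
    have hu' : u ∈ {w : H | ∃ c : ℂ, w = c • e} := by
      rw [← hker]
      refine inKerShift_adjoint_of_orthogonal S.A S.dense z u fun φ => ?_
      exact (Submodule.mem_orthogonal' _ _).1 hu _ ⟨φ, rfl⟩
    obtain ⟨a, rfl⟩ := hψ
    obtain ⟨b, rfl⟩ := hu'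
    rw [inner_smul_left, mul_eq_zero] at hv
    have ha : conj a ≠ 0 := by
      rw [Ne, map_eq_zero]
      rintro rfl
      exact hne (zero_smul _ _)
    rw [inner_smul_left, hv.resolve_left ha, mul_zero]

/-- For `z ∉ Sp(A♯)`: `⟪ψ(z̄), μ⟫ ≠ 0` iff `H = ran(A - z·I) ∔ span{μ}`;
and in that case, for every `φ ∈ H`, `φ - φ̂(z)·μ ∈ ran(A - z·I)`, where
`φ̂(z) = ⟪ψ(z̄), φ⟫ / ⟪ψ(z̄), μ⟫`. -/
theorem statement2 [TopologicalSpace.SeparableSpace H]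
    (S : KreinOp H)
    (B : H →ₗ.[ℂ] H) (hB : IsSAExt S.A B)
    (res : Set ℂ) (R : ℂ → H →L[ℂ] H) (hR : IsResolventOn B res R)
    (hresconj : ∀ w ∈ res, conj w ∈ res)
    (z₀ : ℂ) (hz₀ : z₀ ∈ res)
    (ψ₀ : H) (hψ₀ne : ψ₀ ≠ 0) (hψ₀ : InKerShift S.A.adjoint z₀ ψ₀)
    (μ : H)
    (z : ℂ) (hz : z ∈ res) :
    (⟪psiFun R z₀ ψ₀ (conj z), μ⟫ ≠ 0 ↔ GaugeSplit S.A μ z)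
    ∧ (⟪psiFun R z₀ ψ₀ (conj z), μ⟫ ≠ 0 →
        ∀ φ : H,
          φ - (⟪psiFun R z₀ ψ₀ (conj z), φ⟫ / ⟪psiFun R z₀ ψ₀ (conj z), μ⟫) • μ
            ∈ ranShift S.A z) := by
  set ψ := psiFun R z₀ ψ₀ (conj z) with hψ
  have hzc := hresconj z hz
  have hne : ψ ≠ 0 := psiFun_ne_zero B res R hR z₀ hz₀ ψ₀ hψ₀ne _ hzc
  have hmem : ∀ v : H, v ∈ ranShift S.A z ↔ ⟪ψ, v⟫ = 0 := mem_ranShift_iff S z ψ hne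
    (psiFun_orthogonal S.A B S.dense hB res R hR z₀ ψ₀ hψ₀ z hzc)
  have hmem' : ∀ (v : H) (c : ℂ), v - c • μ ∈ ranShift S.A z ↔ ⟪ψ, v⟫ = c * ⟪ψ, μ⟫ := by
    intro v c
    rw [hmem, inner_sub_right, inner_smul_right, sub_eq_zero]
  refine ⟨⟨fun h v => ⟨⟪ψ, v⟫ / ⟪ψ, μ⟫, ?_, fun c hc => ?_⟩, fun h h0 => ?_⟩, fun h φ => ?_⟩
  · exact (hmem' _ _).2 (div_mul_cancel₀ _ h).symm
  · exact (eq_div_iff h).2 ((hmem' _ _).1 hc).symm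
  -- Decomposing `ψ` itself would make it orthogonal to itself.
  · obtain ⟨c, hc, -⟩ := h ψ
    have := (hmem' _ _).1 hc
    rw [h0, mul_zero] at this
    exact hne (inner_self_eq_zero.1 this)
  · exact (hmem' _ _).2 (div_mul_cancel₀ _ h).symm

end
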